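/- In the Coxeter group W of type E8, for all integers i, j, k, l, m, p with −1 ≤ i < j < k ≤ 2 and −1 ≤ l < m < p ≤ k+2, the identity x'_{6,i} · x'_{5,j} · x_{4,k} · x'_{5,3} · x4 · x'_{6,l} · x'_{5,m} · x_{4,p} · x'_{6,k+3} = x4 · x'_{6,i} · x'_{5,j} · x_{4,k} · x'_{5,3} · x4 · x'_{6,l} · x'_{5,m} · x_{4,p} · x'_{6,k+4} holds. -/

import Mathlib

/-- The descending product `x i * x (i-1) * ... * x j` (equal to `1` when `j > i`). -/
def descProd {G : Type*} [Group G] (x : ℤ → G) (i j : ℤ) : G :=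
  ((List.range (i + 1 - j).toNat).map (fun n => x (i - (n : ℤ)))).prod

/-- The product `x i * x (i-2) * x (i-3) * ... * x j`, with the conventions
`primProd x i (i-1) = x i` and `primProd x i j = 1` for `j ≥ i`. -/
def primProd {G : Type*} [Group G] (x : ℤ → G) (i j : ℤ) : G :=
  if i ≤ j then 1 else x i * descProd x (i - 2) j

/-!
The elements `x N, …, x 4, x 6` satisfy the relations of a chain of type A, in which `x t` is the
transposition `(t, t + 1)` for `t ≤ 4` and `x 6` is `(5, 6)`. Write `τ t` for the transposition
`(t, 6)`. Since `x'_{6,k+3} = τ (k + 3) * x'_{6,k+4}`, it suffices that the word in front of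
`x'_{6,k+3}` conjugates `τ (k + 3)` to `x 4`. As `x 5` commutes with `x_{2,l}`, that word is the
product of `x'_{6,i} x'_{5,j} x_{4,k}`, `x 5 * τ 3 * x 5` and `x_{2,l} x_{3,m} x_{4,p}`. Its right
factor conjugates `τ (k + 3)` to `τ k`, its middle factor commutes with `τ k`, and its left factor
conjugates `τ k` to `x 6` and then to `x 4`.
-/

section Group

variable {G : Type*} [Group G]

theorem inv_eq_self_of_sq_eq_one {g : G} (h : g ^ 2 = 1) : g⁻¹ = g :=
  inv_eq_of_mul_eq_one_left (by rw [← sq, h])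

theorem conj_conj_of_commute {s c r : G} (h : Commute s c) :
    s * (c * r * c⁻¹) * s⁻¹ = c * (s * r * s⁻¹) * c⁻¹ := by
  calc s * (c * r * c⁻¹) * s⁻¹ = s * c * r * (s * c)⁻¹ := by group
    _ = c * s * r * (c * s)⁻¹ := by rw [h.eq]
    _ = c * (s * r * s⁻¹) * c⁻¹ := by group

theorem commute_conj_of_braid {s t r : G} (hst : s * t * s = t * s * t) (htr : Commute t r) :
    Commute s (t * s * r * (t * s)⁻¹) := by
  have hs : s = t * s * t * (t * s)⁻¹ := by rw [← hst]; group
  have h := (Commute.conj_iff (t * s)).mpr htr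
  rwa [← hs] at h

theorem commute_conj_conj_of_braid {s t r : G} (hs : s ^ 2 = 1) (ht : t ^ 2 = 1) (hr : r ^ 2 = 1)
    (hsr : s * r * s = r * s * r) (htr : t * r * t = r * t * r) (hst : Commute s t) :
    Commute (s * r * s⁻¹) (t * r * t⁻¹) := by
  have h := (Commute.conj_iff r).mpr hst
  rw [inv_eq_self_of_sq_eq_one hr, ← hsr, ← htr] at h
  rwa [inv_eq_self_of_sq_eq_one hs, inv_eq_self_of_sq_eq_one ht]

end Group

section Products

variable {G : Type*} [Group G] {x y : ℤ → G} {g : G} {i j : ℤ}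

-- In `descProd` the cast to `ℤ` elaborates to a monadic coercion of the whole list.
theorem descProd_eq_prod_map_range (x : ℤ → G) (i j : ℤ) :
    descProd x i j = ((List.range (i + 1 - j).toNat).map fun n : ℕ => x (i - n)).prod := by
  simp only [descProd, List.bind_eq_flatMap, List.pure_def, ← List.map_eq_flatMap, List.map_map,
    Function.comp_def]

theorem descProd_of_lt (h : i < j) : descProd x i j = 1 := by
  have hlen : (i + 1 - j).toNat = 0 := by omega
  rw [descProd_eq_prod_map_range, hlen, List.range_zero, List.map_nil, List.prod_nil]

theorem descProd_eq_descProd_mul (h : j ≤ i) :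
    descProd x i j = descProd x i (j + 1) * x j := by
  have hlen : (i + 1 - j).toNat = (i + 1 - (j + 1)).toNat + 1 := by omega
  have hlast : i - ((i + 1 - (j + 1)).toNat : ℤ) = j := by omega
  rw [descProd_eq_prod_map_range, hlen, List.range_succ, List.map_append, List.prod_append,
    List.map_singleton, List.prod_singleton, hlast, descProd_eq_prod_map_range]

theorem descProd_self (x : ℤ → G) (i : ℤ) : descProd x i i = x i := by
  rw [descProd_eq_descProd_mul le_rfl, descProd_of_lt (lt_add_one i), one_mul]

theorem descProd_mul_descProd {k : ℤ} (hjk : j ≤ k) (hki : k ≤ i + 1) :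
    descProd x i k * descProd x (k - 1) j = descProd x i j := by
  induction j, hjk using Int.leInductionDown with
  | base => rw [descProd_of_lt (sub_one_lt k), mul_one]
  | pred j hjk ih =>
    rw [descProd_eq_descProd_mul (by omega : j - 1 ≤ k - 1),
      descProd_eq_descProd_mul (by omega : j - 1 ≤ i), sub_add_cancel, ← mul_assoc, ih]

theorem descProd_eq_mul_descProd (h : j ≤ i) :
    descProd x i j = x i * descProd x (i - 1) j := by
  rw [← descProd_mul_descProd h (by omega), descProd_self]

theorem descProd_congr (h : ∀ s, j ≤ s → s ≤ i → x s = y s) :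
    descProd x i j = descProd y i j := by
  rw [descProd_eq_prod_map_range, descProd_eq_prod_map_range]
  refine congrArg List.prod (List.map_congr_left fun n hn => ?_)
  have := List.mem_range.mp hn
  exact h _ (by omega) (by omega)

theorem commute_descProd (h : ∀ s, j ≤ s → s ≤ i → Commute g (x s)) :
    Commute g (descProd x i j) := by
  rw [descProd_eq_prod_map_range]
  refine Commute.list_prod_right _ _ fun z hz => ?_
  obtain ⟨n, hn, rfl⟩ := List.mem_map.mp hz
  have := List.mem_range.mp hn
  exact h _ (by omega) (by omega)

theorem primProd_of_lt (h : j < i) : primProd x i j = x i * descProd x (i - 2) j :=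
  if_neg h.not_ge

end Products

section TypeA

variable {G : Type*} [Group G] {y : ℤ → G} {a b p q s t : ℤ}

/-- The Coxeter relations of type A for the chain `y a, y (a + 1), …, y b`. -/
structure TypeARelations (y : ℤ → G) (a b : ℤ) : Prop where
  sq_eq_one : ∀ i, a ≤ i → i ≤ b → y i ^ 2 = 1
  braid : ∀ i, a ≤ i → i < b → y (i + 1) * y i * y (i + 1) = y i * y (i + 1) * y i
  commute : ∀ i j, a ≤ j → j + 1 < i → i ≤ b → Commute (y i) (y j)

/-- The conjugate of the last generator `y b` of a chain that corresponds to the transposition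
`(t, b + 1)` when `y i` corresponds to `(i, i + 1)`; meant for `t ≤ b`. -/
def chainReflection (y : ℤ → G) (b t : ℤ) : G :=
  (descProd y (b - 1) t)⁻¹ * y b * descProd y (b - 1) t

theorem chainReflection_self (y : ℤ → G) (b : ℤ) : chainReflection y b b = y b := by
  rw [chainReflection, descProd_of_lt (sub_one_lt b), inv_one, one_mul, mul_one]

theorem semiconjBy_descProd_chainReflection_last (y : ℤ → G) (b t : ℤ) :
    SemiconjBy (descProd y (b - 1) t) (chainReflection y b t) (y b) := by
  rw [SemiconjBy, chainReflection]
  group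

namespace TypeARelations

theorem chainReflection_eq_conj (hy : TypeARelations y a b) (hat : a ≤ t) (htb : t < b) :
    chainReflection y b t = y t * chainReflection y b (t + 1) * (y t)⁻¹ := by
  have hinv := inv_eq_self_of_sq_eq_one (hy.sq_eq_one t hat htb.le)
  rw [chainReflection, descProd_eq_descProd_mul (by omega), mul_inv_rev, hinv, chainReflection]
  simp only [mul_assoc]

theorem commute_chainReflection_of_add_one_lt (hy : TypeARelations y a b) (has : a ≤ s)
    (hst : s + 1 < t) (htb : t ≤ b) :
    Commute (y s) (chainReflection y b t) := by
  have hdesc : Commute (y s) (descProd y (b - 1) t) :=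
    commute_descProd fun r htr hrb => (hy.commute r s has (by omega) (by omega)).symm
  exact (hdesc.inv_right.mul_right (hy.commute b s has (by omega) le_rfl).symm).mul_right hdesc

theorem commute_chainReflection_of_gt (hy : TypeARelations y a b) (hat : a ≤ t) (hts : t < s)
    (hsb : s < b) :
    Commute (y s) (chainReflection y b t) := by
  obtain ⟨u, htu, rfl⟩ : ∃ u, t ≤ u ∧ s = u + 1 := ⟨s - 1, by omega, by omega⟩
  clear hts
  induction t, htu using Int.leInductionDown with
  | base =>
    have hcomm : Commute (y u) (chainReflection y b (u + 1 + 1)) :=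
      hy.commute_chainReflection_of_add_one_lt hat (by omega) (by omega)
    have h := commute_conj_of_braid (hy.braid u hat (by omega)) hcomm
    rw [hy.chainReflection_eq_conj hat (by omega),
      hy.chainReflection_eq_conj (by omega : a ≤ u + 1) hsb]
    simpa only [mul_inv_rev, mul_assoc] using h
  | pred t htu ih =>
    have hcomm : Commute (y (u + 1)) (y (t - 1)) :=
      hy.commute (u + 1) (t - 1) hat (by omega) hsb.le
    rw [hy.chainReflection_eq_conj hat (by omega), sub_add_cancel]
    exact (hcomm.mul_right (ih (by omega))).mul_right hcomm.inv_right

theorem semiconjBy_descProd_chainReflection (hy : TypeARelations y a b) (hap : a ≤ p) (hpt : p ≤ t)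
    (htq : t ≤ q) (hqb : q < b) :
    SemiconjBy (descProd y q p) (chainReflection y b (t + 1)) (chainReflection y b t) := by
  have hupper : Commute (descProd y q (t + 1)) (chainReflection y b t) :=
    (commute_descProd fun s hts hsq =>
      (hy.commute_chainReflection_of_gt (by omega) (by omega) (by omega)).symm).symm
  have hstep : SemiconjBy (y t) (chainReflection y b (t + 1)) (chainReflection y b t) := by
    rw [hy.chainReflection_eq_conj (t := t) (by omega) (by omega)]
    exact SemiconjBy.conj_mk _ _
  have hlower : Commute (descProd y (t - 1) p) (chainReflection y b (t + 1)) :=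
    (commute_descProd fun s hps hst =>
      (hy.commute_chainReflection_of_add_one_lt (by omega) (by omega) (by omega)).symm).symm
  rw [← descProd_mul_descProd hpt (by omega), descProd_eq_descProd_mul htq]
  exact (SemiconjBy.mul_left hupper hstep).mul_left hlower

theorem chainReflection_mul_descProd (hy : TypeARelations y a b) (hat : a ≤ t) (htb : t ≤ b) :
    chainReflection y b t * descProd y b (t + 1) = descProd y b t := by
  induction t, htb using Int.leInductionDown with
  | base => rw [chainReflection_self, descProd_of_lt (lt_add_one b), mul_one, descProd_self]
  | pred t htb ih =>
    obtain ⟨u, rfl⟩ : ∃ u, t = u + 1 := ⟨t - 1, by omega⟩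
    rw [add_sub_cancel_right] at hat ⊢
    have hinv := inv_eq_self_of_sq_eq_one (hy.sq_eq_one u hat (by omega))
    have hcomm : Commute (y u) (descProd y b (u + 1 + 1)) :=
      commute_descProd fun s hus hsb => (hy.commute s u hat (by omega) hsb).symm
    have hsplit : descProd y b (u + 1) = descProd y b (u + 1 + 1) * y (u + 1) :=
      descProd_eq_descProd_mul htb
    rw [descProd_eq_descProd_mul (by omega : u ≤ b), hsplit,
      hy.chainReflection_eq_conj hat (by omega), hinv]
    set D := descProd y b (u + 1 + 1)
    set τ := chainReflection y b (u + 1)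
    calc y u * τ * y u * (D * y (u + 1)) = y u * (τ * D) * y u * y (u + 1) := by
          simp only [mul_assoc, hcomm.left_comm]
      _ = D * (y u * y (u + 1) * y u) * y (u + 1) := by
          rw [ih (by omega), hsplit]
          simp only [mul_assoc, hcomm.left_comm]
      _ = D * y (u + 1) * y u * y (u + 1) ^ 2 := by
          rw [← hy.braid u hat (by omega), sq]
          simp only [mul_assoc]
      _ = D * y (u + 1) * y u := by rw [hy.sq_eq_one (u + 1) (by omega) htb, mul_one]

end TypeARelations

end TypeA

section TypeE

variable {G : Type*}

/-- The chain `x N, …, x 4, x 6` of type A inside the diagram of type E, with `x 6` moved to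
index `5`. -/
def longChain (x : ℤ → G) : ℤ → G :=
  Function.update x 5 (x 6)

theorem longChain_five (x : ℤ → G) : longChain x 5 = x 6 :=
  Function.update_self ..

theorem longChain_of_ne (x : ℤ → G) {i : ℤ} (h : i ≠ 5) : longChain x i = x i :=
  Function.update_of_ne h ..

variable [Group G] {x : ℤ → G} {N i j k l m p q t : ℤ}

theorem descProd_longChain (hq : q ≤ 4) : descProd (longChain x) q p = descProd x q p :=
  descProd_congr fun s _ hs => longChain_of_ne x (by omega)

theorem descProd_longChain_five (x : ℤ → G) (t : ℤ) :
    descProd (longChain x) 5 t = primProd x 6 t := by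
  rcases lt_or_ge t 6 with ht | ht
  · rw [descProd_eq_mul_descProd (by omega), longChain_five, descProd_longChain (by norm_num),
      primProd_of_lt ht]
    norm_num
  · rw [descProd_of_lt (by omega), primProd, if_pos ht]

/-- The reflection that corresponds to the transposition `(t, 6)` in the symmetric group generated
by the long chain. -/
def longChainReflection (x : ℤ → G) (t : ℤ) : G :=
  chainReflection (longChain x) 5 t

/-- The Coxeter relations of the diagram formed by the chain `x N, …, x 4` with `x 5` attached to
`x 3` and `x 6` attached to `x 4`; `N = -1` is type E₈. -/
structure TypeERelations (x : ℤ → G) (N : ℤ) : Prop where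
  sq_eq_one : ∀ i, N ≤ i → i ≤ 6 → x i ^ 2 = 1
  braid : ∀ i, N ≤ i → i ≤ 3 → x (i + 1) * x i * x (i + 1) = x i * x (i + 1) * x i
  braid_five_three : x 5 * x 3 * x 5 = x 3 * x 5 * x 3
  braid_six_four : x 6 * x 4 * x 6 = x 4 * x 6 * x 4
  commute : ∀ i j, N ≤ j → j + 1 < i → i ≤ 4 → Commute (x i) (x j)
  commute_five : ∀ i, N ≤ i → i ≤ 6 → i ≠ 3 → i ≠ 5 → Commute (x 5) (x i)
  commute_six : ∀ i, N ≤ i → i ≤ 6 → i ≠ 4 → i ≠ 6 → Commute (x 6) (x i)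

namespace TypeERelations

theorem typeARelations_longChain (hx : TypeERelations x N) : TypeARelations (longChain x) N 5 where
  sq_eq_one i hNi hi := by
    rcases hi.eq_or_lt with rfl | hi
    · rw [longChain_five, hx.sq_eq_one 6 (by omega) le_rfl]
    · rw [longChain_of_ne x hi.ne, hx.sq_eq_one i hNi (by omega)]
  braid i hNi hi := by
    obtain rfl | hi : i = 4 ∨ i < 4 := by omega
    · rw [show (4 + 1 : ℤ) = 5 by norm_num, longChain_five, longChain_of_ne x (by norm_num),
        hx.braid_six_four]
    · rw [longChain_of_ne x (by omega), longChain_of_ne x (by omega), hx.braid i hNi (by omega)]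
  commute i j hNj hji hi := by
    rw [longChain_of_ne x (by omega : j ≠ 5)]
    rcases hi.eq_or_lt with rfl | hi
    · rw [longChain_five]
      exact hx.commute_six j hNj (by omega) (by omega) (by omega)
    · rw [longChain_of_ne x hi.ne]
      exact hx.commute i j hNj hji (by omega)

theorem longChainReflection_eq_conj (hx : TypeERelations x N) (hNt : N ≤ t) (ht : t ≤ 4) :
    longChainReflection x t = x t * longChainReflection x (t + 1) * (x t)⁻¹ := by
  have h := hx.typeARelations_longChain.chainReflection_eq_conj hNt (by omega)
  rwa [longChain_of_ne x (by omega)] at h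

theorem semiconjBy_descProd_longChainReflection (hx : TypeERelations x N) (hNp : N ≤ p)
    (hpt : p ≤ t) (htq : t ≤ q) (hq : q ≤ 4) :
    SemiconjBy (descProd x q p) (longChainReflection x (t + 1)) (longChainReflection x t) := by
  rw [← descProd_longChain hq]
  exact hx.typeARelations_longChain.semiconjBy_descProd_chainReflection hNp hpt htq (by omega)

theorem longChainReflection_mul_primProd (hx : TypeERelations x N) (hNt : N ≤ t) (ht : t ≤ 5) :
    longChainReflection x t * primProd x 6 (t + 1) = primProd x 6 t := by
  simpa only [descProd_longChain_five, longChainReflection] using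
    hx.typeARelations_longChain.chainReflection_mul_descProd hNt ht

theorem longChainReflection_three_eq_conj (hx : TypeERelations x N) (hN : N ≤ 3) :
    longChainReflection x 3 = x 6 * x 4 * x 3 * (x 6 * x 4)⁻¹ := by
  have h := hx.longChainReflection_mul_primProd hN (by norm_num)
  norm_num [primProd_of_lt, descProd_eq_mul_descProd, descProd_of_lt] at h
  rw [eq_mul_inv_iff_mul_eq, h, mul_assoc]

theorem longChainReflection_three_eq_palindrome (hx : TypeERelations x N) (hN : N ≤ 3) :
    longChainReflection x 3 = x 3 * x 4 * x 6 * x 4 * x 3 := by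
  have hthree := inv_eq_self_of_sq_eq_one (hx.sq_eq_one 3 hN (by norm_num))
  have hfour := inv_eq_self_of_sq_eq_one (hx.sq_eq_one 4 (by omega) (by norm_num))
  have hdesc : descProd (longChain x) (5 - 1) 3 = x 4 * x 3 := by
    rw [descProd_longChain (by norm_num), descProd_eq_mul_descProd (by norm_num)]
    norm_num [descProd_self]
  rw [longChainReflection, chainReflection, hdesc, longChain_five, mul_inv_rev, hthree, hfour]
  simp only [mul_assoc]

theorem commute_conj_five_conj_two_longChainReflection_three (hx : TypeERelations x N)
    (hN : N ≤ 2) :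
    Commute (x 5 * longChainReflection x 3 * (x 5)⁻¹)
      (x 2 * longChainReflection x 3 * (x 2)⁻¹) := by
  have hfive : Commute (x 5) (x 6 * x 4) :=
    (hx.commute_five 6 (by omega) (by omega) (by omega) (by omega)).mul_right
      (hx.commute_five 4 (by omega) (by omega) (by omega) (by omega))
  have htwo : Commute (x 2) (x 6 * x 4) :=
    (hx.commute_six 2 hN (by omega) (by omega) (by omega)).symm.mul_right
      (hx.commute 4 2 hN (by omega) le_rfl).symm
  rw [hx.longChainReflection_three_eq_conj (by omega), conj_conj_of_commute hfive,
    conj_conj_of_commute htwo, Commute.conj_iff]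
  exact commute_conj_conj_of_braid (hx.sq_eq_one 5 (by omega) (by omega))
    (hx.sq_eq_one 2 hN (by omega)) (hx.sq_eq_one 3 (by omega) (by omega)) hx.braid_five_three
    (hx.braid 2 hN (by omega)).symm (hx.commute_five 2 hN (by omega) (by omega) (by omega))

theorem commute_conj_five_longChainReflection (hx : TypeERelations x N) (hNk : N ≤ k) (hk : k ≤ 2) :
    Commute (x 5 * longChainReflection x 3 * (x 5)⁻¹) (longChainReflection x k) := by
  induction k, hk using Int.leInductionDown with
  | base =>
    rw [hx.longChainReflection_eq_conj hNk (by norm_num)]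
    exact hx.commute_conj_five_conj_two_longChainReflection_three hNk
  | pred k hk ih =>
    have hfive : Commute (x (k - 1)) (x 5) :=
      (hx.commute_five (k - 1) hNk (by omega) (by omega) (by omega)).symm
    have hthree : Commute (x (k - 1)) (longChainReflection x 3) := by
      have h := hx.typeARelations_longChain.commute_chainReflection_of_add_one_lt (t := 3) hNk
        (by omega) (by norm_num)
      rwa [longChain_of_ne x (by omega)] at h
    have hconj := ((hfive.mul_right hthree).mul_right hfive.inv_right).symm
    rw [hx.longChainReflection_eq_conj hNk (by omega), sub_add_cancel]
    exact (hconj.mul_right (ih (by omega))).mul_right hconj.inv_right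

theorem semiconjBy_primProd_mul_primProd (hx : TypeERelations x N) (hNi : N ≤ i) (hi : i ≤ 4)
    (hNj : N ≤ j) (hj : j < 5) :
    SemiconjBy (primProd x 6 i * primProd x 5 j) (x 6) (x 4) := by
  have hdesc {r : ℤ} (hNr : N ≤ r) : Commute (descProd x 3 r) (x 6) :=
    (commute_descProd fun s hrs hs =>
      hx.commute_six s (by omega) (by omega) (by omega) (by omega)).symm
  have hfive : Commute (x 5) (x 6) := hx.commute_five 6 (by omega) le_rfl (by omega) (by omega)
  have hbraid : SemiconjBy (x 6 * x 4) (x 6) (x 4) := by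
    rw [SemiconjBy, hx.braid_six_four, mul_assoc]
  rw [primProd_of_lt (by omega : i < 6), primProd_of_lt hj, descProd_eq_mul_descProd (by omega),
    ← mul_assoc (x 6)]
  exact (hbraid.mul_left (hdesc hNi)).mul_left (SemiconjBy.mul_left hfive (hdesc hNj))

theorem semiconjBy_left_factor (hx : TypeERelations x N) (hNi : N ≤ i) (hi : i ≤ 4) (hNj : N ≤ j)
    (hj : j < 5) (k : ℤ) :
    SemiconjBy (primProd x 6 i * primProd x 5 j * descProd x 4 k) (longChainReflection x k)
      (x 4) := by
  have h := semiconjBy_descProd_chainReflection_last (longChain x) 5 k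
  rw [longChain_five, descProd_longChain (by norm_num)] at h
  exact (hx.semiconjBy_primProd_mul_primProd hNi hi hNj hj).mul_left h

theorem semiconjBy_right_factor (hx : TypeERelations x N) (hk : k ≤ 2) (hNl : N ≤ l) (hl : l ≤ k)
    (hNm : N ≤ m) (hm : m ≤ k + 1) (hNp : N ≤ p) (hp : p ≤ k + 2) :
    SemiconjBy (descProd x 2 l * descProd x 3 m * descProd x 4 p)
      (longChainReflection x (k + 3)) (longChainReflection x k) := by
  have hleft := hx.semiconjBy_descProd_longChainReflection hNl hl hk (by norm_num)
  have hmiddle := hx.semiconjBy_descProd_longChainReflection (q := 3) hNm hm (by omega)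
    (by norm_num)
  have hright := hx.semiconjBy_descProd_longChainReflection (q := 4) hNp hp (by omega) le_rfl
  rw [add_assoc] at hmiddle hright
  exact (hleft.mul_left hmiddle).mul_left hright

theorem middle_word_eq_conj_mul (hx : TypeERelations x N) (hNl : N ≤ l) (hl : l ≤ 3) (hm : m < 5) :
    primProd x 5 3 * x 4 * primProd x 6 l * primProd x 5 m =
      x 5 * longChainReflection x 3 * (x 5)⁻¹ * (descProd x 2 l * descProd x 3 m) := by
  have hinv := inv_eq_self_of_sq_eq_one (hx.sq_eq_one 5 (by omega) (by norm_num))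
  have hcomm : Commute (x 5) (descProd x 2 l) :=
    commute_descProd fun s hls hs =>
      hx.commute_five s (by omega) (by omega) (by omega) (by omega)
  have hfive_three : primProd x 5 3 = x 5 * x 3 := by
    rw [primProd_of_lt (by norm_num), show (5 - 2 : ℤ) = 3 by norm_num, descProd_self]
  have hsix : primProd x 6 l = x 6 * x 4 * x 3 * descProd x 2 l := by
    rw [primProd_of_lt (by omega), descProd_eq_mul_descProd (by omega),
      descProd_eq_mul_descProd (by omega)]
    norm_num [mul_assoc]
  have hfive : primProd x 5 m = x 5 * descProd x 3 m := primProd_of_lt hm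
  rw [hfive_three, hsix, hfive, hx.longChainReflection_three_eq_palindrome (by omega), hinv]
  simp only [mul_assoc, hcomm.left_comm]

theorem semiconjBy_word (hx : TypeERelations x N) (hNi : N ≤ i) (hi : i ≤ 4) (hNj : N ≤ j)
    (hj : j < 5) (hk : k ≤ 2) (hNl : N ≤ l) (hl : l ≤ k) (hNm : N ≤ m) (hm : m ≤ k + 1)
    (hNp : N ≤ p) (hp : p ≤ k + 2) :
    SemiconjBy
      (primProd x 6 i * primProd x 5 j * descProd x 4 k * primProd x 5 3 * x 4 * primProd x 6 l *
        primProd x 5 m * descProd x 4 p)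
      (longChainReflection x (k + 3)) (x 4) := by
  have hleft := hx.semiconjBy_left_factor hNi hi hNj hj k
  have hmiddle := hx.commute_conj_five_longChainReflection (hNl.trans hl) hk
  have hright := hx.semiconjBy_right_factor hk hNl hl hNm hm hNp hp
  have hword := hx.middle_word_eq_conj_mul (m := m) hNl (by omega) (by omega)
  have h := (hleft.mul_left hmiddle).mul_left hright
  rw [← mul_assoc, mul_assoc _ (x 5 * _ * _), ← hword] at h
  simpa only [mul_assoc] using h

end TypeERelations

end TypeE

theorem E8_delta_general {G : Type*} [Group G] {x : ℤ → G} {N : ℤ} (hx : TypeERelations x N)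
    {i j k l m p : ℤ} (hNi : N ≤ i) (hi : i ≤ 4) (hNj : N ≤ j) (hj : j < 5) (hk : k ≤ 2)
    (hNl : N ≤ l) (hl : l ≤ k) (hNm : N ≤ m) (hm : m ≤ k + 1) (hNp : N ≤ p) (hp : p ≤ k + 2) :
    primProd x 6 i * primProd x 5 j * descProd x 4 k * primProd x 5 3 * x 4 * primProd x 6 l *
        primProd x 5 m * descProd x 4 p * primProd x 6 (k + 3) =
      x 4 * primProd x 6 i * primProd x 5 j * descProd x 4 k * primProd x 5 3 * x 4 *
        primProd x 6 l * primProd x 5 m * descProd x 4 p * primProd x 6 (k + 4) := by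
  have hword := hx.semiconjBy_word hNi hi hNj hj hk hNl hl hNm hm hNp hp
  have hlast := hx.longChainReflection_mul_primProd (t := k + 3) (by omega) (by omega)
  rw [← hlast, ← mul_assoc, hword.eq, show k + 3 + 1 = k + 4 by ring]
  simp only [mul_assoc]

theorem E8_delta (G : Type*) [Group G] (x : ℤ → G)
    (hsq : ∀ i : ℤ, (-1) ≤ i → i ≤ 6 → x i ^ 2 = 1)
    (hbraid : ∀ i : ℤ, (-1) ≤ i → i ≤ 3 → x (i+1) * x i * x (i+1) = x i * x (i+1) * x i)
    (h53 : x 5 * x 3 * x 5 = x 3 * x 5 * x 3)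
    (h64 : x 6 * x 4 * x 6 = x 4 * x 6 * x 4)
    (hcomm : ∀ i j : ℤ, (-1) ≤ j → j + 1 < i → i ≤ 4 → x i * x j = x j * x i)
    (hcomm5 : ∀ i : ℤ, (-1) ≤ i → i ≤ 6 → i ≠ 3 → i ≠ 5 → x 5 * x i = x i * x 5)
    (hcomm6 : ∀ i : ℤ, (-1) ≤ i → i ≤ 6 → i ≠ 4 → i ≠ 6 → x 6 * x i = x i * x 6) :
    ∀ i j k l m p : ℤ, -1 ≤ i → i < j → j < k → k ≤ 2 → -1 ≤ l → l < m → m < p → p ≤ k + 2 →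
      primProd x 6 i * primProd x 5 j * descProd x 4 k * primProd x 5 3 * x 4 * primProd x 6 l *
        primProd x 5 m * descProd x 4 p * primProd x 6 (k+3) =
      x 4 * primProd x 6 i * primProd x 5 j * descProd x 4 k * primProd x 5 3 * x 4 *
        primProd x 6 l * primProd x 5 m * descProd x 4 p * primProd x 6 (k+4) := by
  intro i j k l m p hi hij hjk hk hl hlm hmp hp
  exact E8_delta_general ⟨hsq, hbraid, h53, h64, hcomm, hcomm5, hcomm6⟩ hi (by omega) (by omega)
    (by omega) hk hl (by omega) (by omega) (by omega) (by omega) hp
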